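/- Let N ≥ 1 and σ > 0 with 0 < Nσ < 4. Then E_min(m) > -∞ for every m > 0; there exist A ∈ ℝ and B > 0 such that E_min(m) < A·m - B·m^{σ+1} for every m > 0 (so in particular E_min(m)/m → -∞ as m → ∞); and for any k₁, k₂ > 0 the set {u ∈ H²(ℝ^N) : ‖u‖_{L²} ≤ k₁ and E(u) ≤ k₂} is bounded in H²(ℝ^N). -/

import Mathlib

open MeasureTheory Filter Topology

noncomputable section

abbrev Esp (N : ℕ) := EuclideanSpace ℝ (Fin N)

/-- Smooth compactly supported test functions. -/
def TestFun {N : ℕ} (φ : Esp N → ℂ) : Prop :=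
  ContDiff ℝ (⊤ : ℕ∞) φ ∧ HasCompactSupport φ

/-- Partial derivative in the `i`-th coordinate direction. -/
def pderivC {N : ℕ} (i : Fin N) (φ : Esp N → ℂ) : Esp N → ℂ :=
  fun x => fderiv ℝ φ x (EuclideanSpace.single i (1 : ℝ))

/-- The Laplacian of a (smooth) function. -/
def lapC {N : ℕ} (φ : Esp N → ℂ) : Esp N → ℂ :=
  fun x => ∑ i, pderivC i (pderivC i φ) x

/-- `v` is the weak `i`-th partial derivative of `u`. -/
def IsWeakPDeriv {N : ℕ} (u : Esp N → ℂ) (i : Fin N) (v : Esp N → ℂ) : Prop :=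
  ∀ φ : Esp N → ℂ, TestFun φ → ∫ x, u x * pderivC i φ x = - ∫ x, v x * φ x

/-- `v` is the weak Laplacian of `u`. -/
def IsWeakLap {N : ℕ} (u v : Esp N → ℂ) : Prop :=
  ∀ φ : Esp N → ℂ, TestFun φ → ∫ x, u x * lapC φ x = ∫ x, v x * φ x

/-- An element of the Sobolev space `H²(ℝ^N, ℂ)`: an `L²` function together with its
weak partial derivatives and its weak Laplacian, all in `L²`. -/
structure H2 (N : ℕ) where
  u : Esp N → ℂ
  grad : Fin N → Esp N → ℂ
  lapl : Esp N → ℂ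
  u_mem : MemLp u 2 (volume : Measure (Esp N))
  grad_mem : ∀ i, MemLp (grad i) 2 (volume : Measure (Esp N))
  lapl_mem : MemLp lapl 2 (volume : Measure (Esp N))
  grad_spec : ∀ i, IsWeakPDeriv u i (grad i)
  lapl_spec : IsWeakLap u lapl

namespace H2

variable {N : ℕ}

/-- `∫ |u|²`. -/
def massSq (U : H2 N) : ℝ := ∫ x, ‖U.u x‖ ^ 2

/-- `∫ |∇u|²`. -/
def gradSq (U : H2 N) : ℝ := ∑ i, ∫ x, ‖U.grad i x‖ ^ 2

/-- `∫ |Δu|²`. -/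
def lapSq (U : H2 N) : ℝ := ∫ x, ‖U.lapl x‖ ^ 2

/-- `∫ |u|^{2σ+2}`. -/
def pPow (σ : ℝ) (U : H2 N) : ℝ := ∫ x, ‖U.u x‖ ^ (2 * σ + 2)

/-- The energy `E(u) = ∫|Δu|² - 2∫|∇u|² - (1/(σ+1))∫|u|^{2σ+2}`. -/
def energy (σ : ℝ) (U : H2 N) : ℝ :=
  U.lapSq - 2 * U.gradSq - (1 / (σ + 1)) * U.pPow σ

/-- The square of the `H²` norm. -/
def h2NormSq (U : H2 N) : ℝ := U.massSq + U.gradSq + U.lapSq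

/-- `u` does not vanish almost everywhere. -/
def Nontriv (U : H2 N) : Prop := ¬ (U.u =ᵐ[(volume : Measure (Esp N))] 0)

end H2

/-- `E_min(m) = inf {E(u) : u ∈ H², ∫|u|² = m}`, with values in `EReal`. -/
def EminE (N : ℕ) (σ m : ℝ) : EReal :=
  ⨅ (U : H2 N) (_ : U.massSq = m), ((U.energy σ : ℝ) : EReal)

/-- The `L^p` norm (as a real number) of a function on `ℝ^N`. -/
def rLp {N : ℕ} (p : ℝ) (f : Esp N → ℂ) : ℝ :=
  (eLpNorm f (ENNReal.ofReal p) (volume : Measure (Esp N))).toReal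


/-- The best constant `B(N,σ)` in the Gagliardo–Nirenberg–Sobolev inequality
`‖u‖_{L^{2σ+2}}^{2σ+2} ≤ B ‖Δu‖_{L²}^{Nσ/2} ‖u‖_{L²}^{2+2σ-Nσ/2}`. -/
def GNconst (N : ℕ) (σ : ℝ) : ℝ :=
  sSup {r : ℝ | ∃ U : H2 N, U.Nontriv ∧
    r = U.pPow σ /
      (rLp 2 U.lapl ^ ((N : ℝ) * σ / 2) * rLp 2 U.u ^ (2 + 2 * σ - (N : ℝ) * σ / 2))}

/-- `k* = (σ+1)^{1/σ} B(N,σ)^{-1/σ}`. -/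
def kstar (N : ℕ) (σ : ℝ) : ℝ := (σ + 1) ^ (1 / σ) * GNconst N σ ^ (-(1 / σ))

/-- Strong `H²` convergence of `v k (· + xs k)` to `U`. -/
def H2TendstoTrans {N : ℕ} (v : ℕ → H2 N) (xs : ℕ → Esp N) (U : H2 N) : Prop :=
  Tendsto (fun k => eLpNorm (fun x => (v k).u (x + xs k) - U.u x) 2
      (volume : Measure (Esp N))) atTop (nhds 0) ∧
  (∀ i, Tendsto (fun k => eLpNorm (fun x => (v k).grad i (x + xs k) - U.grad i x) 2
      (volume : Measure (Esp N))) atTop (nhds 0)) ∧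
  Tendsto (fun k => eLpNorm (fun x => (v k).lapl (x + xs k) - U.lapl x) 2
      (volume : Measure (Esp N))) atTop (nhds 0)

/-- `u` is a weak (`H^{-2}`) solution of `Δ²u + 2Δu + (1+c)u - |u|^{2σ}u = 0`. -/
def SolvesSW {N : ℕ} (σ c : ℝ) (U : H2 N) : Prop :=
  ∀ φ : Esp N → ℂ, TestFun φ →
    (∫ x, U.lapl x * lapC φ x) + 2 * (∫ x, U.lapl x * φ x) +
        ((1 + c : ℝ) : ℂ) * (∫ x, U.u x * φ x) -
        (∫ x, ((‖U.u x‖ ^ (2 * σ) : ℝ) : ℂ) * U.u x * φ x) = 0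

/-- `T_c(u) = ∫|Δu|² - 2∫|∇u|² + (1+c)∫|u|²`. -/
def Tfun {N : ℕ} (c : ℝ) (U : H2 N) : ℝ := U.lapSq - 2 * U.gradSq + (1 + c) * U.massSq

/-- `t(c) = inf {T_c(u) : ∫|u|^{2σ+2} = 1}`. -/
def tmin (N : ℕ) (σ c : ℝ) : ℝ := sInf {r : ℝ | ∃ U : H2 N, U.pPow σ = 1 ∧ r = Tfun c U}

/-- The action `S_c(u) = E(u) + (1+c)‖u‖_{L²}² = T_c(u) - (1/(σ+1))∫|u|^{2σ+2}`. -/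
def action {N : ℕ} (σ c : ℝ) (U : H2 N) : ℝ := U.energy σ + (1 + c) * U.massSq

section Helpers

open scoped SchwartzMap ContDiff FourierTransform LineDeriv

lemma exists_cutoff (N : ℕ) : ∃ (χ : ℕ → Esp N → ℝ) (C : ℝ),
    (∀ n, ContDiff ℝ ∞ (χ n)) ∧ (∀ n, HasCompactSupport (χ n)) ∧
    (∀ n x, |χ n x| ≤ 1) ∧ (∀ n x, ‖fderiv ℝ (χ n) x‖ ≤ C) ∧
    (∀ x, ∀ᶠ n in atTop, χ n =ᶠ[𝓝 x] fun _ => 1) := by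
  let b : ContDiffBump (0 : Esp N) := ⟨1, 2, by norm_num, by norm_num⟩
  have hb : ContDiff ℝ ∞ b := b.contDiff
  have hbc : HasCompactSupport (fderiv ℝ b) := b.hasCompactSupport.fderiv ℝ
  obtain ⟨C, hC⟩ := hbc.exists_bound_of_continuous (hb.continuous_fderiv (by simp))
  refine ⟨fun n x => b (((1:ℝ)/(n+1)) • x), C, fun n => ?_, fun n => ?_, fun n x => ?_, fun n x => ?_, fun x => ?_⟩
  · exact hb.comp (contDiff_const_smul _)
  · exact b.hasCompactSupport.comp_smul (by positivity)
  · rw [abs_of_nonneg b.nonneg]; exact b.le_one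
  · rw [fderiv_comp_smul, norm_smul]
    have h1 : ‖(1:ℝ)/(n+1)‖ ≤ 1 := by
      rw [Real.norm_of_nonneg (by positivity)]
      rw [div_le_one (by positivity)]; linarith [(Nat.cast_nonneg n : (0:ℝ) ≤ n)]
    calc _ ≤ 1 * ‖fderiv ℝ b (((1:ℝ)/(n+1)) • x)‖ := by gcongr
      _ ≤ C := by rw [one_mul]; exact hC _
  · obtain ⟨n0, hn0⟩ := exists_nat_gt ‖x‖
    filter_upwards [eventually_ge_atTop n0] with n hn
    have hx : ‖x‖ < n + 1 := by
      have : (n0:ℝ) ≤ n := by exact_mod_cast hn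
      linarith
    have : {y : Esp N | ‖y‖ < n + 1} ∈ 𝓝 x := (isOpen_lt continuous_norm continuous_const).mem_nhds hx
    filter_upwards [this] with y hy
    apply b.one_of_mem_closedBall
    simp only [mem_closedBall_zero_iff, norm_smul]
    rw [Real.norm_of_nonneg (by positivity), div_mul_eq_mul_div, one_mul]
    show _ ≤ (1:ℝ)
    rw [div_le_one (by positivity)]
    exact le_of_lt hy

lemma MemLp.integrable_mul2 {N : ℕ} {f g : Esp N → ℂ} (hf : MemLp f 2 volume)
    (hg : MemLp g 2 volume) : Integrable (fun x => f x * g x) volume :=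
  hf.integrable_mul hg

/-- Extension of a weak divergence identity from test functions to Schwartz functions. -/
lemma weak_schwartz {N : ℕ} (F : Fin N → Esp N → ℂ) (w : Esp N → ℂ)
    (hF : ∀ i, MemLp (F i) 2 volume) (hw : MemLp w 2 volume)
    (h : ∀ φ : Esp N → ℂ, TestFun φ → ∑ i, ∫ x, F i x * pderivC i φ x = - ∫ x, w x * φ x)
    (φ : 𝓢(Esp N, ℂ)) :
    ∑ i, ∫ x, F i x * pderivC i φ x = - ∫ x, w x * φ x := by
  obtain ⟨χ, C, hχs, hχc, hχ1, hχd, hχe⟩ := exists_cutoff N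
  have hC : 0 ≤ C := (norm_nonneg _).trans (hχd 0 0)
  let ψ : ℕ → Esp N → ℂ := fun n x => χ n x • φ x
  have hψs : ∀ n, ContDiff ℝ ∞ (ψ n) := fun n => (hχs n).smul (φ.smooth ⊤)
  have hψ : ∀ n, TestFun (ψ n) := fun n => ⟨hψs n, (hχc n).smul_right⟩
  have hφ2 : MemLp φ 2 volume := φ.memLp 2
  have hdφ2 : ∀ i, MemLp (pderivC i φ) 2 volume := fun i => by
    have e : ⇑(∂_{(EuclideanSpace.single i (1:ℝ) : Esp N)} φ : 𝓢(Esp N, ℂ)) = pderivC i φ :=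
      funext fun x => SchwartzMap.lineDerivOp_apply_eq_fderiv _ _ _
    rw [← e]
    exact (∂_{(EuclideanSpace.single i (1:ℝ) : Esp N)} φ : 𝓢(Esp N, ℂ)).memLp 2 volume
  have hψd : ∀ n i x, pderivC i (ψ n) x =
      χ n x • pderivC i φ x + (fderiv ℝ (χ n) x (EuclideanSpace.single i 1)) • φ x := by
    intro n i x
    unfold pderivC
    have := fderiv_fun_smul (𝕜 := ℝ) (x := x) ((hχs n).differentiable (by simp) x)
      (φ.differentiableAt)
    simp only [ψ]
    rw [this]; simp
  have hev : ∀ x, ∀ᶠ n in atTop, ψ n =ᶠ[𝓝 x] φ := by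
    intro x
    filter_upwards [hχe x] with n hn
    filter_upwards [hn] with y hy
    simp [ψ, hy]
  have L1 : Tendsto (fun n => ∫ x, w x * ψ n x) atTop (𝓝 (∫ x, w x * φ x)) := by
    apply tendsto_integral_of_dominated_convergence (fun x => ‖w x * φ x‖)
    · intro n
      exact hw.1.mul (hψs n).continuous.aestronglyMeasurable
    · exact (MemLp.integrable_mul2 hw hφ2).norm
    · intro n
      refine Eventually.of_forall fun x => ?_
      simp only [ψ, norm_mul, norm_smul, Real.norm_eq_abs]
      have := mul_le_mul_of_nonneg_right (hχ1 n x) (norm_nonneg (φ x))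
      rw [one_mul] at this
      gcongr
    · refine Eventually.of_forall fun x => ?_
      apply tendsto_const_nhds.congr'
      filter_upwards [hev x] with n hn
      rw [hn.eq_of_nhds]
  have L2 : ∀ i, Tendsto (fun n => ∫ x, F i x * pderivC i (ψ n) x) atTop
      (𝓝 (∫ x, F i x * pderivC i φ x)) := by
    intro i
    apply tendsto_integral_of_dominated_convergence
      (fun x => ‖F i x * pderivC i φ x‖ + C * ‖F i x * φ x‖)
    · intro n
      refine (hF i).1.mul ?_
      exact (((hψs n).continuous_fderiv (by simp)).clm_apply continuous_const).aestronglyMeasurable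
    · exact (MemLp.integrable_mul2 (hF i) (hdφ2 i)).norm.add
        ((MemLp.integrable_mul2 (hF i) hφ2).norm.const_mul C)
    · intro n
      refine Eventually.of_forall fun x => ?_
      rw [hψd, norm_mul, norm_mul, norm_mul]
      have h1 : ‖χ n x • pderivC i φ x‖ ≤ ‖pderivC i φ x‖ := by
        rw [norm_smul]
        exact mul_le_of_le_one_left (norm_nonneg _) (hχ1 n x)
      have h2 : ‖(fderiv ℝ (χ n) x (EuclideanSpace.single i 1)) • φ x‖ ≤ C * ‖φ x‖ := by
        rw [norm_smul]
        gcongr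
        calc _ ≤ ‖fderiv ℝ (χ n) x‖ * ‖(EuclideanSpace.single i 1 : Esp N)‖ :=
              ContinuousLinearMap.le_opNorm _ _
          _ ≤ C := by simpa using hχd n x
      calc _ ≤ ‖F i x‖ * (‖pderivC i φ x‖ + C * ‖φ x‖) := by
            gcongr
            exact (norm_add_le _ _).trans (add_le_add h1 h2)
        _ = _ := by ring
    · refine Eventually.of_forall fun x => ?_
      apply tendsto_const_nhds.congr'
      filter_upwards [hev x] with n hn
      simp only [pderivC]
      rw [hn.fderiv_eq]
  have L3 := tendsto_finsetSum (Finset.univ : Finset (Fin N)) (fun i _ => L2 i)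
  refine tendsto_nhds_unique L3 ?_
  have : (fun n => ∑ i, ∫ x, F i x * pderivC i (ψ n) x) = fun n => - ∫ x, w x * ψ n x := by
    ext n; exact h _ (hψ n)
  rw [this]
  exact L1.neg

lemma fourier_pairing {N : ℕ} (w : Esp N → ℂ) (hw : MemLp w 2 volume) (φ : 𝓢(Esp N, ℂ)) :
    ∫ ξ, φ ξ * (𝓕 (hw.toLp) : Lp ℂ 2 (volume : Measure (Esp N))) ξ =
      ∫ x, w x * (𝓕 φ : 𝓢(Esp N, ℂ)) x := by
  have h1 := congrArg (fun T : 𝓢'(Esp N, ℂ) => T φ)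
    (Lp.fourier_toTemperedDistribution_eq (hw.toLp : Lp ℂ 2 (volume : Measure (Esp N))))
  simp only [TemperedDistribution.fourier_apply, Lp.toTemperedDistribution_apply, smul_eq_mul] at h1
  rw [← h1]
  apply integral_congr_ae
  filter_upwards [hw.coeFn_toLp] with x hx
  rw [hx, mul_comm]

/-- Fourier side of the weak divergence identity. -/
lemma weak_fourier {N : ℕ} (F : Fin N → Esp N → ℂ) (w : Esp N → ℂ)
    (hF : ∀ i, MemLp (F i) 2 volume) (hw : MemLp w 2 volume)
    (h : ∀ φ : Esp N → ℂ, TestFun φ → ∑ i, ∫ x, F i x * pderivC i φ x = - ∫ x, w x * φ x) :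
    ∀ᵐ ξ : Esp N, (𝓕 (hw.toLp) : Lp ℂ 2 (volume : Measure (Esp N))) ξ =
      ∑ i, (2 * Real.pi * Complex.I) * (ξ i : ℂ) *
        (𝓕 ((hF i).toLp) : Lp ℂ 2 (volume : Measure (Esp N))) ξ := by
  have hli : ∀ (f : Lp ℂ 2 (volume : Measure (Esp N))), LocallyIntegrable f volume := fun f =>
    (Lp.memLp f).locallyIntegrable (by norm_num)
  have hli2 : ∀ i, LocallyIntegrable (fun ξ : Esp N => (2 * Real.pi * Complex.I) * (ξ i : ℂ) *
        (𝓕 ((hF i).toLp) : Lp ℂ 2 (volume : Measure (Esp N))) ξ) volume := by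
    intro i
    have hc : Continuous (fun ξ : Esp N => (2 * Real.pi * Complex.I) * (ξ i : ℂ)) := by fun_prop
    have := (hli (𝓕 ((hF i).toLp))).locallyIntegrableOn Set.univ
    rw [← locallyIntegrableOn_univ]
    exact this.continuousOn_mul hc.continuousOn isOpen_univ.isLocallyClosed
  refine ae_eq_of_integral_contDiff_smul_eq (hli _) ?_ ?_
  · exact locallyIntegrable_finsetSum _ fun i _ => hli2 i
  intro g hg hgc
  have hg₁ : HasCompactSupport (Complex.ofRealCLM ∘ g) := hgc.comp_left rfl
  have hg₂ : ContDiff ℝ ∞ (Complex.ofRealCLM ∘ g) := by fun_prop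
  let φ : 𝓢(Esp N, ℂ) := hg₁.toSchwartzMap hg₂
  have hφ : ∀ x, φ x = (g x : ℂ) := fun x => rfl
  have e1 : ∫ x, g x • (𝓕 (hw.toLp) : Lp ℂ 2 (volume : Measure (Esp N))) x =
      ∫ x, w x * (𝓕 φ : 𝓢(Esp N, ℂ)) x := by
    rw [← fourier_pairing w hw φ]; simp [hφ]
  rw [e1]
  have e2 := weak_schwartz F w hF hw h (𝓕 φ)
  have e2 := (neg_eq_iff_eq_neg.mpr e2).symm
  rw [e2]
  simp only [Finset.smul_sum]
  rw [integral_finsetSum, ← Finset.sum_neg_distrib]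
  · refine Finset.sum_congr rfl fun i _ => ?_
    have e : ⇑(∂_{(EuclideanSpace.single i (1:ℝ) : Esp N)} (𝓕 φ : 𝓢(Esp N, ℂ)) : 𝓢(Esp N, ℂ)) = pderivC i (𝓕 φ : 𝓢(Esp N, ℂ)) :=
      funext fun x => SchwartzMap.lineDerivOp_apply_eq_fderiv _ _ _
    rw [← e, SchwartzMap.lineDerivOp_fourier_eq, ← fourier_pairing (F i) (hF i), ← integral_neg]
    congr 1
    ext ξ
    have : (inner ℝ · (EuclideanSpace.single i (1:ℝ) : Esp N)).HasTemperateGrowth := by fun_prop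
    simp [SchwartzMap.smulLeftCLM_apply_apply this, hφ]
    have e5 : inner ℝ ξ (EuclideanSpace.single i (1:ℝ) : Esp N) = ξ i := by
      simp [EuclideanSpace.inner_single_right]
    rw [e5]
    ring
  · intro i _
    exact (hli2 i).integrable_smul_left_of_hasCompactSupport hg.continuous hgc

/-- The `L²` Fourier transform of a function. -/
def fhat {N : ℕ} {w : Esp N → ℂ} (hw : MemLp w 2 (volume : Measure (Esp N))) : Esp N → ℂ :=
  ⇑(𝓕 (hw.toLp) : Lp ℂ 2 (volume : Measure (Esp N)))

lemma fhat_memLp {N : ℕ} {w : Esp N → ℂ} (hw : MemLp w 2 (volume : Measure (Esp N))) :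
    MemLp (fhat hw) 2 volume := Lp.memLp _

lemma norm_sq_Lp {N : ℕ} (f : Lp ℂ 2 (volume : Measure (Esp N))) :
    ‖f‖ ^ 2 = ∫ x, ‖f x‖ ^ 2 := by
  rw [← inner_self_eq_norm_sq (𝕜 := ℂ) f, L2.inner_def]
  simp_rw [inner_self_eq_norm_sq_to_K]
  norm_cast

lemma integral_norm_sq_toLp {N : ℕ} {w : Esp N → ℂ} (hw : MemLp w 2 (volume : Measure (Esp N))) :
    ‖hw.toLp‖ ^ 2 = ∫ x, ‖w x‖ ^ 2 := by
  rw [norm_sq_Lp]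
  apply integral_congr_ae
  filter_upwards [hw.coeFn_toLp] with x hx
  rw [hx]

lemma plancherel {N : ℕ} {w : Esp N → ℂ} (hw : MemLp w 2 (volume : Measure (Esp N))) :
    ∫ ξ, ‖fhat hw ξ‖ ^ 2 = ∫ x, ‖w x‖ ^ 2 := by
  rw [fhat, ← norm_sq_Lp, Lp.norm_fourier_eq, integral_norm_sq_toLp]

lemma TestFun.pderiv {N : ℕ} {φ : Esp N → ℂ} (hφ : TestFun φ) (i : Fin N) :
    TestFun (pderivC i φ) := by
  refine ⟨?_, ?_⟩
  · exact (hφ.1.fderiv_right (m := ∞) (by simp)).clm_apply contDiff_const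
  · exact hφ.2.fderiv_apply ℝ _

lemma TestFun.memLp {N : ℕ} {φ : Esp N → ℂ} (hφ : TestFun φ) : MemLp φ 2 volume :=
  hφ.1.continuous.memLp_of_hasCompactSupport hφ.2

namespace H2
variable {N : ℕ} (U : H2 N)

lemma grad_fhat (i : Fin N) : ∀ᵐ ξ : Esp N, fhat (U.grad_mem i) ξ =
    (2 * Real.pi * Complex.I) * (ξ i : ℂ) * fhat U.u_mem ξ := by
  classical
  have hF : ∀ j, MemLp (fun x => if j = i then U.u x else 0) 2 (volume : Measure (Esp N)) := by
    intro j
    by_cases hj : j = i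
    · simpa [hj] using U.u_mem
    · simp [hj]
  have := weak_fourier (fun j x => if j = i then U.u x else 0) (U.grad i) hF (U.grad_mem i) (by
    intro φ hφ
    rw [Finset.sum_eq_single i]
    · simpa using U.grad_spec i φ hφ
    · intro j _ hj; simp [hj]
    · simp)
  filter_upwards [this, Lp.coeFn_zero ℂ 2 (volume : Measure (Esp N))] with ξ hξ h0
  rw [fhat, hξ, Finset.sum_eq_single i]
  · have : (hF i).toLp = U.u_mem.toLp := by
      congr 1; simp
    rw [this]; rfl
  · intro j _ hj
    have : (hF j).toLp = 0 := by
      rw [← MemLp.toLp_zero (MemLp.zero' (ε := ℂ))]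
      congr 1; simp only [hj, if_false]; rfl
    rw [this]
    have h1 : (𝓕 (0 : Lp ℂ 2 (volume : Measure (Esp N))) : Lp ℂ 2 (volume : Measure (Esp N))) = 0 :=
      FourierTransform.fourier_zero
    rw [h1]
    rw [h0]; simp
  · simp

lemma lap_fhat : ∀ᵐ ξ : Esp N, fhat U.lapl_mem ξ =
    - ((2 * Real.pi) ^ 2 * ‖ξ‖ ^ 2 : ℝ) * fhat U.u_mem ξ := by
  have := weak_fourier U.grad U.lapl U.grad_mem U.lapl_mem (by
    intro φ hφ
    rw [← U.lapl_spec φ hφ]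
    simp only [lapC, Finset.mul_sum]
    rw [integral_finsetSum, ← Finset.sum_neg_distrib]
    · refine Finset.sum_congr rfl fun i _ => ?_
      rw [U.grad_spec i _ (hφ.pderiv i), neg_neg]
    · intro i _
      exact MemLp.integrable_mul2 U.u_mem ((hφ.pderiv i).pderiv i).memLp)
  filter_upwards [this, ae_all_iff.2 U.grad_fhat] with ξ h1 h2
  rw [fhat, h1]
  simp only [fhat] at h2
  simp_rw [h2]
  rw [EuclideanSpace.norm_sq_eq]
  change _ = _ * (𝓕 (U.u_mem.toLp) : Lp ℂ 2 (volume : Measure (Esp N))) ξ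
  push_cast
  rw [Finset.mul_sum, ← Finset.sum_neg_distrib, Finset.sum_mul]
  refine Finset.sum_congr rfl fun i _ => ?_
  have : (‖ξ i‖ : ℂ)^2 = (ξ i : ℂ)^2 := by
    norm_cast; simp
  rw [this]
  linear_combination (4 * Real.pi^2 * (ξ i:ℂ)^2 * (𝓕 (U.u_mem.toLp) : Lp ℂ 2 (volume : Measure (Esp N))) ξ) * Complex.I_sq

lemma lap_fhat_norm : ∀ᵐ ξ : Esp N, ‖fhat U.lapl_mem ξ‖ ^ 2 =
    (2 * Real.pi) ^ 4 * ‖ξ‖ ^ 4 * ‖fhat U.u_mem ξ‖ ^ 2 := by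
  filter_upwards [U.lap_fhat] with ξ h
  rw [h, norm_mul, norm_neg, Complex.norm_real, Real.norm_of_nonneg (by positivity)]
  ring

lemma grad_fhat_norm : ∀ᵐ ξ : Esp N, ∑ i, ‖fhat (U.grad_mem i) ξ‖ ^ 2 =
    (2 * Real.pi) ^ 2 * ‖ξ‖ ^ 2 * ‖fhat U.u_mem ξ‖ ^ 2 := by
  filter_upwards [ae_all_iff.2 U.grad_fhat] with ξ h
  simp_rw [h]
  rw [EuclideanSpace.norm_sq_eq, Finset.mul_sum, Finset.sum_mul]
  refine Finset.sum_congr rfl fun i _ => ?_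
  rw [norm_mul, norm_mul, norm_mul, norm_mul, Complex.norm_real, Complex.norm_real, Complex.norm_I]
  simp [mul_pow]

lemma massSq_nonneg : 0 ≤ U.massSq := integral_nonneg fun _ => by positivity
lemma lapSq_nonneg : 0 ≤ U.lapSq := integral_nonneg fun _ => by positivity
lemma gradSq_nonneg : 0 ≤ U.gradSq :=
  Finset.sum_nonneg fun _ _ => integral_nonneg fun _ => by positivity

lemma gradSq_le : U.gradSq ≤ (1/8) * U.lapSq + 2 * U.massSq := by
  have i1 := (fhat_memLp U.u_mem).norm.integrable_sq
  have i2 := (fhat_memLp U.lapl_mem).norm.integrable_sq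
  have i3 := fun i => (fhat_memLp (U.grad_mem i)).norm.integrable_sq
  unfold gradSq lapSq massSq
  simp_rw [← plancherel (U.grad_mem _)]
  rw [← plancherel U.lapl_mem, ← plancherel U.u_mem, ← integral_finsetSum _ fun i _ => i3 i,
    ← integral_const_mul, ← integral_const_mul, ← integral_add (i2.const_mul _) (i1.const_mul _)]
  apply integral_mono_ae (integrable_finsetSum _ fun i _ => i3 i)
    ((i2.const_mul _).add (i1.const_mul _))
  filter_upwards [U.lap_fhat_norm, U.grad_fhat_norm] with ξ h1 h2
  rw [Pi.add_apply, h1, h2]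
  have h3 : (2 * Real.pi) ^ 2 * ‖ξ‖ ^ 2 ≤ 1/8 * ((2 * Real.pi) ^ 4 * ‖ξ‖ ^ 4) + 2 := by
    nlinarith [sq_nonneg ((2 * Real.pi) ^ 2 * ‖ξ‖ ^ 2 - 4)]
  calc _ ≤ (1/8 * ((2 * Real.pi) ^ 4 * ‖ξ‖ ^ 4) + 2) * ‖fhat U.u_mem ξ‖ ^ 2 := by gcongr
    _ = _ := by ring

end H2

lemma low_bound {N : ℕ} (f : Lp ℂ 2 (volume : Measure (Esp N))) (hf : Integrable f volume) :
    ∀ᵐ x, ‖(𝓕⁻ f : Lp ℂ 2 (volume : Measure (Esp N))) x‖ ≤ ∫ ξ, ‖f ξ‖ := by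
  have hL : Continuous fun p : Esp N × Esp N ↦ (-innerₗ (Esp N)) p.1 p.2 := by
    simp only [LinearMap.neg_apply, innerₗ_apply_apply]; fun_prop
  have hcont := VectorFourier.fourierIntegral_continuous (μ := (volume : Measure (Esp N)))
    Real.continuous_fourierChar hL hf
  have key : ∀ᵐ x, (𝓕⁻ f : Lp ℂ 2 (volume : Measure (Esp N))) x =
      VectorFourier.fourierIntegral Real.fourierChar volume (-innerₗ (Esp N)) f x := by
    refine ae_eq_of_integral_contDiff_smul_eq
      ((Lp.memLp _).locallyIntegrable (by norm_num)) hcont.locallyIntegrable ?_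
    intro g hg hgc
    have hg₁ : HasCompactSupport (Complex.ofRealCLM ∘ g) := hgc.comp_left rfl
    have hg₂ : ContDiff ℝ ∞ (Complex.ofRealCLM ∘ g) := by fun_prop
    let φ : 𝓢(Esp N, ℂ) := hg₁.toSchwartzMap hg₂
    have hφ : ∀ x, φ x = (g x : ℂ) := fun x => rfl
    have h1 := congrArg (fun T : 𝓢'(Esp N, ℂ) => T φ)
      (Lp.fourierInv_toTemperedDistribution_eq f)
    simp only [TemperedDistribution.fourierInv_apply, Lp.toTemperedDistribution_apply,
      smul_eq_mul] at h1
    have h2 := VectorFourier.integral_fourierIntegral_smul_eq_flip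
      (μ := (volume : Measure (Esp N))) (ν := (volume : Measure (Esp N)))
      (L := -innerₗ (Esp N)) (f := φ) (g := f) Real.continuous_fourierChar hL φ.integrable hf
    have hfl : (-innerₗ (Esp N)).flip = -innerₗ (Esp N) := by
      ext x y; simp [real_inner_comm]
    rw [hfl] at h2
    have h3 : ∀ x, (𝓕⁻ φ : 𝓢(Esp N, ℂ)) x =
        VectorFourier.fourierIntegral Real.fourierChar volume (-innerₗ (Esp N)) φ x := by
      intro x; rw [SchwartzMap.fourierInv_coe]; rfl
    simp only [smul_eq_mul, ← h3] at h2
    rw [h2] at h1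
    simpa [hφ] using h1.symm
  filter_upwards [key] with x hx
  rw [hx]
  exact VectorFourier.norm_fourierIntegral_le_integral_norm _ _ _ _ _

namespace H2
variable {N : ℕ} (U : H2 N)

lemma split (R t : ℝ) (hR : 0 < R) (ht : 0 < t) : ∃ a b : Lp ℂ 2 (volume : Measure (Esp N)),
    (∀ᵐ x, U.u x = a x + b x) ∧
    (∀ᵐ x, ‖a x‖ ≤ t * volume.real (Metric.closedBall (0 : Esp N) R) + U.massSq / (4 * t)) ∧
    R ^ 4 * ‖b‖ ^ 2 ≤ U.lapSq := by
  have hm := fhat_memLp U.u_mem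
  set s := Metric.closedBall (0 : Esp N) R with hs
  have hsm : MeasurableSet s := Metric.isClosed_closedBall.measurableSet
  have hsf : volume s < ⊤ := (isCompact_closedBall _ _).measure_lt_top
  have h1 : MemLp (s.indicator (fhat U.u_mem)) 2 volume := hm.indicator hsm
  have h2 : MemLp (sᶜ.indicator (fhat U.u_mem)) 2 volume := hm.indicator hsm.compl
  have i1 := hm.norm.integrable_sq
  have is : Integrable (s.indicator (fhat U.u_mem)) volume := by
    rw [integrable_indicator_iff hsm]
    have : IsFiniteMeasure (volume.restrict s) := ⟨by simpa using hsf⟩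
    exact (hm.restrict s).integrable (by norm_num)
  refine ⟨𝓕⁻ h1.toLp, 𝓕⁻ h2.toLp, ?_, ?_, ?_⟩
  · have e : U.u_mem.toLp = (𝓕⁻ h1.toLp : Lp ℂ 2 (volume : Measure (Esp N))) + 𝓕⁻ h2.toLp := by
      rw [← FourierTransform.fourierInv_add, ← MemLp.toLp_add]
      rw [← FourierTransform.fourierInv_fourier_eq (F := Lp ℂ 2 (volume : Measure (Esp N))) (U.u_mem.toLp : Lp ℂ 2 (volume : Measure (Esp N)))]
      congr 1
      rw [← Lp.toLp_coeFn (𝓕 (U.u_mem.toLp) : Lp ℂ 2 (volume : Measure (Esp N))) (Lp.memLp _)]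
      congr 1
      exact (Set.indicator_self_add_compl s (fhat U.u_mem)).symm
    have e2 := Lp.coeFn_add (𝓕⁻ h1.toLp : Lp ℂ 2 (volume : Measure (Esp N))) (𝓕⁻ h2.toLp)
    rw [← e] at e2
    filter_upwards [e2, U.u_mem.coeFn_toLp] with x h3 h4
    rw [← h4, h3]; rfl
  · have := low_bound h1.toLp (is.congr h1.coeFn_toLp.symm)
    filter_upwards [this] with x hx
    refine hx.trans ?_
    have e1 : ∫ ξ, ‖(h1.toLp : Lp ℂ 2 (volume : Measure (Esp N))) ξ‖ = ∫ ξ in s, ‖fhat U.u_mem ξ‖ := by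
      rw [← integral_indicator hsm]
      apply integral_congr_ae
      filter_upwards [h1.coeFn_toLp] with ξ h
      rw [h, norm_indicator_eq_indicator_norm]
    rw [e1]
    calc ∫ ξ in s, ‖fhat U.u_mem ξ‖ ≤ ∫ ξ in s, (t + ‖fhat U.u_mem ξ‖ ^ 2 / (4 * t)) := by
          apply integral_mono
          · exact ((integrable_indicator_iff hsm).1 is).norm
          · exact (integrableOn_const hsf.ne).add (i1.integrableOn.div_const _)
          · intro ξ
            have : t + ‖fhat U.u_mem ξ‖ ^ 2 / (4 * t) - ‖fhat U.u_mem ξ‖ =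
              (‖fhat U.u_mem ξ‖ - 2 * t) ^ 2 / (4 * t) := by field_simp; ring
            have h0 : 0 ≤ (‖fhat U.u_mem ξ‖ - 2 * t) ^ 2 / (4 * t) := by positivity
            show ‖fhat U.u_mem ξ‖ ≤ t + ‖fhat U.u_mem ξ‖ ^ 2 / (4 * t)
            linarith
      _ = t * volume.real s + (∫ ξ in s, ‖fhat U.u_mem ξ‖ ^ 2) / (4 * t) := by
          have j1 : Integrable (fun _ : Esp N => t) (volume.restrict s) := integrableOn_const hsf.ne
          have j2 : Integrable (fun ξ => ‖fhat U.u_mem ξ‖ ^ 2 / (4 * t)) (volume.restrict s) :=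
            i1.integrableOn.div_const _
          rw [integral_add j1 j2,
            setIntegral_const, integral_div, smul_eq_mul, mul_comm]
      _ ≤ _ := by
          have : ∫ ξ in s, ‖fhat U.u_mem ξ‖ ^ 2 ≤ U.massSq := by
            rw [massSq, ← plancherel U.u_mem]
            exact setIntegral_le_integral i1 (Eventually.of_forall fun _ => by positivity)
          gcongr
  · have hbn : ‖(𝓕⁻ h2.toLp : Lp ℂ 2 (volume : Measure (Esp N)))‖ = ‖h2.toLp‖ := by
      rw [← Lp.norm_fourier_eq, FourierTransform.fourier_fourierInv_eq]
    rw [hbn, integral_norm_sq_toLp, lapSq, ← plancherel U.lapl_mem,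
      ← integral_const_mul]
    apply integral_mono_ae (h2.norm.integrable_sq.const_mul _)
      (fhat_memLp U.lapl_mem).norm.integrable_sq
    filter_upwards [U.lap_fhat_norm] with ξ h
    rw [h]
    by_cases hξ : ξ ∈ s
    · simp [hξ]; positivity
    · have : ξ ∈ sᶜ := hξ
      rw [Set.indicator_of_mem this]
      have hR' : R ≤ ‖ξ‖ := by
        rw [hs, mem_closedBall_zero_iff] at hξ; exact (not_le.1 hξ).le
      have : 1 ≤ (2 * Real.pi) ^ 4 := one_le_pow₀ (by linarith [Real.pi_gt_three])
      have : R ^ 4 ≤ (2 * Real.pi) ^ 4 * ‖ξ‖ ^ 4 := by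
        calc R ^ 4 = 1 * R ^ 4 := by ring
          _ ≤ _ := by gcongr
      gcongr

/-- Weak type bound. -/
lemma weak_type (hN : 1 ≤ N) (k : ℝ) (hk : 0 < k) : ∃ K : ℝ, 0 ≤ K ∧ ∀ U : H2 N, U.massSq ≤ k →
    ∀ l : ℝ, 0 < l → volume {x | l < ‖U.u x‖} ≤
      ENNReal.ofReal (K * U.lapSq * l ^ (-2 - 8 / (N : ℝ))) := by
  set w₀ := volume.real (Metric.ball (0 : Esp N) 1) with hw₀
  have hw₁ : 0 < w₀ := by
    rw [hw₀, measureReal_def]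
    exact ENNReal.toReal_pos (Metric.measure_ball_pos _ _ one_pos).ne' measure_ball_lt_top.ne
  have hN0 : (0:ℝ) < N := by exact_mod_cast hN
  refine ⟨4 * (4 * k * w₀) ^ (4 / (N:ℝ)), by positivity, fun U hU l hl => ?_⟩
  set R := (l ^ 2 / (4 * k * w₀)) ^ (1 / (N:ℝ)) with hR
  have hR0 : 0 < R := by positivity
  have hRN : R ^ N = l ^ 2 / (4 * k * w₀) := by
    rw [hR, ← Real.rpow_natCast, ← Real.rpow_mul (by positivity), one_div,
      inv_mul_cancel₀ hN0.ne', Real.rpow_one]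
  have hV : volume.real (Metric.closedBall (0 : Esp N) R) = l ^ 2 / (4 * k) := by
    rw [measureReal_def, Measure.addHaar_closedBall _ _ hR0.le, ENNReal.toReal_mul,
      ENNReal.toReal_ofReal (by positivity), finrank_euclideanSpace_fin, hRN,
      ← measureReal_def, ← hw₀]
    field_simp
  obtain ⟨a, b, hab, ha, hb⟩ := U.split R (k / l) hR0 (by positivity)
  have hint : Integrable (fun x => ‖b x‖ ^ 2) volume := (Lp.memLp b).norm.integrable_sq
  have hsub : volume {x | l < ‖U.u x‖} ≤ volume {x | l ^ 2 / 4 ≤ ‖b x‖ ^ 2} := by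
    apply measure_mono_ae
    filter_upwards [hab, ha] with x h1 h2 h3
    change l < ‖U.u x‖ at h3
    change l ^ 2 / 4 ≤ ‖b x‖ ^ 2
    rw [hV] at h2
    have h4 : U.massSq / (4 * (k / l)) ≤ l / 4 := by
      rw [div_le_div_iff₀ (by positivity) (by positivity)]
      have : l * (4 * (k / l)) = 4 * k := by field_simp
      linarith
    have h5 : k / l * (l ^ 2 / (4 * k)) = l / 4 := by field_simp
    have h6 : ‖U.u x‖ ≤ ‖a x‖ + ‖b x‖ := by rw [h1]; exact norm_add_le _ _
    have : l / 2 ≤ ‖b x‖ := by linarith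
    nlinarith
  refine hsub.trans ?_
  rw [← ENNReal.ofReal_toReal (hint.measure_ge_lt_top (by positivity)).ne]
  apply ENNReal.ofReal_le_ofReal
  have hch := mul_meas_ge_le_integral_of_nonneg (Eventually.of_forall fun x => by positivity) hint (l ^ 2 / 4)
  rw [← norm_sq_Lp] at hch
  rw [← measureReal_def]
  have hR4 : R ^ 4 = l ^ (8 / (N:ℝ)) / (4 * k * w₀) ^ (4 / (N:ℝ)) := by
    rw [hR, ← Real.rpow_natCast, ← Real.rpow_mul (by positivity),
      Real.div_rpow (by positivity) (by positivity), ← Real.rpow_natCast l, ← Real.rpow_mul hl.le]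
    congr 2 <;> push_cast <;> ring
  have h7 : l ^ (-2 - 8 / (N : ℝ)) = 1 / (l ^ 2 * l ^ (8 / (N:ℝ))) := by
    rw [show -2 - 8 / (N : ℝ) = -(2 + 8/(N:ℝ)) by ring, Real.rpow_neg hl.le, Real.rpow_add hl]
    norm_num
  rw [h7]
  have h8 : volume.real {x | l ^ 2 / 4 ≤ ‖b x‖ ^ 2} ≤ 4 / l ^ 2 * ‖b‖ ^ 2 := by
    rw [div_mul_eq_mul_div, le_div_iff₀ (by positivity)]
    linarith
  have h9 : ‖b‖ ^ 2 ≤ U.lapSq / R ^ 4 := by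
    rw [le_div_iff₀ (by positivity)]; linarith
  calc _ ≤ _ := h8
    _ ≤ 4 / l ^ 2 * (U.lapSq / R ^ 4) := by gcongr
    _ = _ := by
      rw [hR4]
      have : (4 * k * w₀) ^ (4 / (N:ℝ)) ≠ 0 := by positivity
      have : l ^ (8 / (N:ℝ)) ≠ 0 := by positivity
      field_simp

end H2

namespace H2
variable {N : ℕ}

lemma pPow_le_aux {σ : ℝ} (hσ : 0 < σ) (U : H2 N) (k K q : ℝ) (hK : 0 ≤ K) (hq : 2 * σ < q)
    (hU : U.massSq ≤ k)
    (h : ∀ l : ℝ, 0 < l → volume {x | l < ‖U.u x‖} ≤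
      ENNReal.ofReal (K * U.lapSq * l ^ (-2 - q))) (l₀ : ℝ) (hl : 0 < l₀) :
    U.pPow σ ≤ (2 * σ + 2) * (l₀ ^ (2 * σ) * k + K * U.lapSq * (l₀ ^ (-(q - 2 * σ)) / (q - 2 * σ))) := by
  have hk : 0 ≤ k := U.massSq_nonneg.trans hU
  have hL := U.lapSq_nonneg
  have hnn : 0 ≤ᵐ[volume] fun x => ‖U.u x‖ := Eventually.of_forall fun x => norm_nonneg _
  have hms : AEMeasurable (fun x => ‖U.u x‖) volume := U.u_mem.1.norm.aemeasurable
  have hd : 0 < q - 2 * σ := by linarith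
  unfold pPow
  rw [integral_eq_lintegral_of_nonneg_ae (Eventually.of_forall fun x => by positivity)
    (hms.pow_const _).aestronglyMeasurable]
  apply ENNReal.toReal_le_of_le_ofReal (by positivity)
  rw [lintegral_rpow_eq_lintegral_meas_lt_mul volume hnn hms (p := 2 * σ + 2) (by positivity),
    ENNReal.ofReal_mul (by positivity)]
  gcongr
  have h2 := lintegral_rpow_eq_lintegral_meas_lt_mul volume hnn hms (p := 2) (by positivity)
  have h2' : ∫⁻ t in Set.Ioi (0:ℝ), volume {a | t < ‖U.u a‖} * ENNReal.ofReal (t ^ ((2:ℝ) - 1))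
      ≤ ENNReal.ofReal k := by
    have e : ∫⁻ x, ENNReal.ofReal (‖U.u x‖ ^ (2:ℝ)) = ENNReal.ofReal U.massSq := by
      rw [massSq, ofReal_integral_eq_lintegral_ofReal U.u_mem.norm.integrable_sq
        (Eventually.of_forall fun x => by positivity)]
      norm_num
    rw [e] at h2
    calc _ ≤ ENNReal.ofReal 2 * ∫⁻ t in Set.Ioi (0:ℝ), volume {a | t < ‖U.u a‖} * ENNReal.ofReal (t ^ ((2:ℝ) - 1)) := by
          apply le_mul_of_one_le_left (zero_le)
          norm_num
      _ = _ := h2.symm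
      _ ≤ _ := ENNReal.ofReal_le_ofReal hU
  rw [← Set.Ioc_union_Ioi_eq_Ioi hl.le, lintegral_union measurableSet_Ioi
    (Set.Ioc_disjoint_Ioi le_rfl), ENNReal.ofReal_add (by positivity) (by positivity)]
  apply add_le_add
  · rw [ENNReal.ofReal_mul (by positivity)]
    refine le_trans ?_ (mul_le_mul_right h2' _)
    rw [← lintegral_const_mul' _ _ ENNReal.ofReal_ne_top]
    refine (setLIntegral_mono' measurableSet_Ioc ?_).trans
      (lintegral_mono_set Set.Ioc_subset_Ioi_self)
    intro t ht
    rw [mul_left_comm]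
    gcongr
    rw [← ENNReal.ofReal_mul (by positivity)]
    apply ENNReal.ofReal_le_ofReal
    rw [show 2 * σ + 2 - 1 = 2 * σ + (2 - 1) by ring, Real.rpow_add ht.1]
    have := ht.1
    gcongr
    exact ht.2
  · have hi : IntegrableOn (fun t : ℝ => K * U.lapSq * t ^ (-(q - 2 * σ) - 1)) (Set.Ioi l₀) :=
      (integrableOn_Ioi_rpow_of_lt (by linarith) hl).const_mul _
    have e : K * U.lapSq * (l₀ ^ (-(q - 2 * σ)) / (q - 2 * σ)) =
        ∫ t in Set.Ioi l₀, K * U.lapSq * t ^ (-(q - 2 * σ) - 1) := by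
      rw [integral_const_mul, integral_Ioi_rpow_of_lt (by linarith) hl, sub_add_cancel, neg_div_neg_eq]
    rw [e, ofReal_integral_eq_lintegral_ofReal hi]
    · apply setLIntegral_mono' measurableSet_Ioi
      intro t ht
      have ht0 : 0 < t := hl.trans ht
      calc _ ≤ ENNReal.ofReal (K * U.lapSq * t ^ (-2 - q)) * ENNReal.ofReal (t ^ (2 * σ + 2 - 1)) := by
            gcongr; exact h t ht0
        _ = _ := by
            rw [← ENNReal.ofReal_mul (by positivity), mul_assoc, ← Real.rpow_add ht0]
            congr 3; ring
    · filter_upwards [ae_restrict_mem measurableSet_Ioi] with t ht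
      have ht0 : 0 < t := hl.trans ht
      positivity

lemma pPow_le {σ : ℝ} (hN : 1 ≤ N) (hσ : 0 < σ) (hcrit : (N : ℝ) * σ < 4) (k ε : ℝ) (hk : 0 < k)
    (hε : 0 < ε) : ∃ C : ℝ, 0 ≤ C ∧ ∀ U : H2 N, U.massSq ≤ k → U.pPow σ ≤ ε * U.lapSq + C := by
  obtain ⟨K, hK, hw⟩ := weak_type hN k hk
  have hN0 : (0:ℝ) < N := by exact_mod_cast hN
  have hq : 2 * σ < 8 / (N:ℝ) := by
    rw [lt_div_iff₀ hN0]; linarith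
  have hd : 0 < 8 / (N:ℝ) - 2 * σ := by linarith
  have ht : Tendsto (fun l : ℝ => (2 * σ + 2) * (K * (l ^ (-(8 / (N:ℝ) - 2 * σ)) / (8 / (N:ℝ) - 2 * σ)))) atTop
      (𝓝 ((2 * σ + 2) * (K * (0 / (8 / (N:ℝ) - 2 * σ))))) :=
    (((tendsto_rpow_neg_atTop hd).div_const _).const_mul _).const_mul _
  simp only [zero_div, mul_zero] at ht
  obtain ⟨l₀, h1, h2⟩ := ((ht.eventually_lt_const hε).and (eventually_gt_atTop 0)).exists
  refine ⟨(2 * σ + 2) * (l₀ ^ (2 * σ) * k), by positivity, fun U hU => ?_⟩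
  refine (pPow_le_aux hσ U k K _ hK hq hU (hw U hU) l₀ h2).trans ?_
  have := mul_le_mul_of_nonneg_right h1.le U.lapSq_nonneg
  linarith

lemma energy_ge {σ : ℝ} (hN : 1 ≤ N) (hσ : 0 < σ) (hcrit : (N : ℝ) * σ < 4) (k : ℝ) (hk : 0 < k) :
    ∃ C : ℝ, ∀ U : H2 N, U.massSq ≤ k → U.lapSq / 2 - C ≤ U.energy σ := by
  obtain ⟨C, hC, h⟩ := pPow_le (N := N) hN hσ hcrit k ((σ + 1) / 4) hk (by positivity)
  refine ⟨4 * k + C / (σ + 1), fun U hU => ?_⟩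
  have h1 := U.gradSq_le
  have h2 : (1 / (σ + 1)) * U.pPow σ ≤ U.lapSq / 4 + C / (σ + 1) := by
    calc _ ≤ (1 / (σ + 1)) * ((σ + 1) / 4 * U.lapSq + C) := by gcongr; exact h U hU
      _ = _ := by field_simp
  unfold energy
  linarith

end H2

lemma TestFun.int_parts {N : ℕ} {f g : Esp N → ℂ} (hf : TestFun f) (hg : TestFun g) (i : Fin N) :
    ∫ x, f x * pderivC i g x = - ∫ x, pderivC i f x * g x := by
  exact integral_mul_fderiv_eq_neg_fderiv_mul_of_integrable (𝕜 := ℂ)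
    (MemLp.integrable_mul2 (hf.pderiv i).memLp hg.memLp)
    (MemLp.integrable_mul2 hf.memLp (hg.pderiv i).memLp)
    (MemLp.integrable_mul2 hf.memLp hg.memLp)
    (fun x _ => hf.1.differentiable (by simp) x) (fun x _ => hg.1.differentiable (by simp) x)

namespace H2
variable {N : ℕ}

/-- A test function as an element of `H²`. -/
def ofTest (φ : Esp N → ℂ) (hφ : TestFun φ) : H2 N where
  u := φ
  grad i := pderivC i φ
  lapl := lapC φ
  u_mem := hφ.memLp
  grad_mem i := (hφ.pderiv i).memLp
  lapl_mem := memLp_finsetSum _ fun i _ => ((hφ.pderiv i).pderiv i).memLp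
  grad_spec i ψ hψ := hφ.int_parts hψ i
  lapl_spec ψ hψ := by
    simp only [lapC, Finset.mul_sum, Finset.sum_mul]
    rw [integral_finsetSum, integral_finsetSum]
    · refine Finset.sum_congr rfl fun i _ => ?_
      rw [hφ.int_parts (hψ.pderiv i) i, (hφ.pderiv i).int_parts hψ i, neg_neg]
    · exact fun i _ => MemLp.integrable_mul2 ((hφ.pderiv i).pderiv i).memLp hψ.memLp
    · exact fun i _ => MemLp.integrable_mul2 hφ.memLp ((hψ.pderiv i).pderiv i).memLp

/-- Scaling by a real constant. -/
def scale (c : ℝ) (U : H2 N) : H2 N where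
  u x := c * U.u x
  grad i x := c * U.grad i x
  lapl x := c * U.lapl x
  u_mem := U.u_mem.const_mul _
  grad_mem i := (U.grad_mem i).const_mul _
  lapl_mem := U.lapl_mem.const_mul _
  grad_spec i ψ hψ := by
    simp only [mul_assoc, integral_const_mul, U.grad_spec i ψ hψ, mul_neg]
  lapl_spec ψ hψ := by
    simp only [mul_assoc, integral_const_mul, U.lapl_spec ψ hψ]

lemma scale_massSq (c : ℝ) (U : H2 N) : (U.scale c).massSq = c ^ 2 * U.massSq := by
  simp [massSq, scale, mul_pow, integral_const_mul]
lemma scale_lapSq (c : ℝ) (U : H2 N) : (U.scale c).lapSq = c ^ 2 * U.lapSq := by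
  simp [lapSq, scale, mul_pow, integral_const_mul]
lemma scale_gradSq (c : ℝ) (U : H2 N) : (U.scale c).gradSq = c ^ 2 * U.gradSq := by
  simp [gradSq, scale, mul_pow, integral_const_mul, Finset.mul_sum]
lemma scale_pPow (σ c : ℝ) (hc : 0 ≤ c) (U : H2 N) :
    (U.scale c).pPow σ = c ^ (2 * σ + 2) * U.pPow σ := by
  simp only [pPow, scale, norm_mul, Complex.norm_real, Real.norm_of_nonneg hc]
  rw [← integral_const_mul]
  congr 1; ext x
  rw [Real.mul_rpow hc (norm_nonneg _)]

lemma exists_pos (N : ℕ) (σ : ℝ) (hσ : 0 < σ) : ∃ U : H2 N, 0 < U.massSq ∧ 0 < U.pPow σ := by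
  let b : ContDiffBump (0 : Esp N) := ⟨1, 2, by norm_num, by norm_num⟩
  have hc : ContDiff ℝ ∞ (fun x => (b x : ℂ)) := Complex.ofRealCLM.contDiff.comp b.contDiff
  have hs : HasCompactSupport (fun x => (b x : ℂ)) := b.hasCompactSupport.comp_left (g := Complex.ofReal) rfl
  have hb0 : b 0 = 1 := b.one_of_mem_closedBall (by simp [b])
  refine ⟨ofTest (fun x => (b x : ℂ)) ⟨hc, hs⟩, ?_, ?_⟩
  · simp only [massSq, ofTest]
    apply Continuous.integral_pos_of_hasCompactSupport_nonneg_nonzero (x := 0)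
    · exact hc.continuous.norm.pow 2
    · exact hs.comp_left (g := fun z : ℂ => ‖z‖ ^ 2) (by simp)
    · intro x; positivity
    · simp [hb0]
  · simp only [pPow, ofTest]
    apply Continuous.integral_pos_of_hasCompactSupport_nonneg_nonzero (x := 0)
    · exact hc.continuous.norm.rpow_const (fun x => Or.inr (by positivity))
    · exact hs.comp_left (g := fun z : ℂ => ‖z‖ ^ (2 * σ + 2)) (by
        simp; rw [Real.zero_rpow (by positivity)])
    · intro x; positivity
    · simp [hb0]

end H2

lemma EminE_upper (N : ℕ) (σ : ℝ) (hσ : 0 < σ) : ∃ A B : ℝ, 0 < B ∧ ∀ m : ℝ, 0 < m →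
      EminE N σ m < ((A * m - B * m ^ (σ + 1) : ℝ) : EReal) := by
  obtain ⟨U, hM, hP⟩ := H2.exists_pos N σ hσ
  refine ⟨(U.lapSq - 2 * U.gradSq) / U.massSq + 1,
    1 / (σ + 1) * U.pPow σ / U.massSq ^ (σ + 1), by positivity, fun m hm => ?_⟩
  set c := Real.sqrt (m / U.massSq) with hc
  have hc2 : c ^ 2 = m / U.massSq := Real.sq_sqrt (by positivity)
  have hcp : c ^ (2 * σ + 2) = m ^ (σ + 1) / U.massSq ^ (σ + 1) := by
    rw [← Real.div_rpow hm.le hM.le, ← hc2, ← Real.rpow_natCast, ← Real.rpow_mul (Real.sqrt_nonneg _)]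
    congr 1; push_cast; ring
  have hmass : (U.scale c).massSq = m := by
    rw [H2.scale_massSq, hc2]; field_simp
  calc EminE N σ m ≤ (((U.scale c).energy σ : ℝ) : EReal) := iInf₂_le (U.scale c) hmass
    _ < _ := by
      rw [EReal.coe_lt_coe_iff, H2.energy, H2.scale_lapSq, H2.scale_gradSq,
        H2.scale_pPow _ _ (Real.sqrt_nonneg _), hc2, hcp]
      have : m / U.massSq * U.lapSq - 2 * (m / U.massSq * U.gradSq) -
          1 / (σ + 1) * (m ^ (σ + 1) / U.massSq ^ (σ + 1) * U.pPow σ) =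
        ((U.lapSq - 2 * U.gradSq) / U.massSq + 1) * m -
          1 / (σ + 1) * U.pPow σ / U.massSq ^ (σ + 1) * m ^ (σ + 1) - m := by ring
      linarith

lemma EminE_lower (N : ℕ) (σ : ℝ) (hN : 1 ≤ N) (hσ : 0 < σ) (hcrit : (N : ℝ) * σ < 4)
    (m : ℝ) (hm : 0 < m) : ⊥ < EminE N σ m := by
  obtain ⟨C, h⟩ := H2.energy_ge (N := N) hN hσ hcrit m hm
  refine (EReal.bot_lt_coe (-C)).trans_le ?_
  refine le_iInf₂ fun U hU => ?_
  rw [EReal.coe_le_coe_iff]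
  have := h U hU.le
  have := U.lapSq_nonneg
  linarith

lemma EminE_tendsto (N : ℕ) (σ : ℝ) (hN : 1 ≤ N) (hσ : 0 < σ) (hcrit : (N : ℝ) * σ < 4) :
    Tendsto (fun m : ℝ => (EminE N σ m).toReal / m) atTop atBot := by
  obtain ⟨A, B, hB, h⟩ := EminE_upper N σ hσ
  have ht : Tendsto (fun m : ℝ => A + -(B * m ^ σ)) atTop atBot :=
    tendsto_atBot_add_const_left _ _ (tendsto_neg_atTop_atBot.comp
      ((tendsto_rpow_atTop hσ).const_mul_atTop hB))
  refine tendsto_atBot_mono' _ ?_ ht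
  filter_upwards [eventually_gt_atTop 0] with m hm
  have h1 := EReal.toReal_le_toReal (h m hm).le (EminE_lower N σ hN hσ hcrit m hm).ne'
    (EReal.coe_ne_top _)
  rw [EReal.toReal_coe] at h1
  rw [div_le_iff₀ hm]
  rw [Real.rpow_add hm, Real.rpow_one] at h1
  linarith

lemma h2_bound (N : ℕ) (σ : ℝ) (hN : 1 ≤ N) (hσ : 0 < σ) (hcrit : (N : ℝ) * σ < 4)
    (k₁ k₂ : ℝ) (hk : 0 < k₁) : ∃ C : ℝ, ∀ U : H2 N,
      rLp 2 U.u ≤ k₁ → U.energy σ ≤ k₂ → U.h2NormSq ≤ C := by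
  obtain ⟨C, h⟩ := H2.energy_ge (N := N) hN hσ hcrit (k₁ ^ 2) (by positivity)
  refine ⟨3 * k₁ ^ 2 + (9 / 8) * (2 * (k₂ + C)), fun U h1 h2 => ?_⟩
  have hm : U.massSq ≤ k₁ ^ 2 := by
    rw [H2.massSq, ← integral_norm_sq_toLp U.u_mem, Lp.norm_toLp]
    have : ENNReal.ofReal 2 = 2 := by norm_num
    rw [rLp, this] at h1
    gcongr
  have h3 := h U hm
  have h4 := U.gradSq_le
  unfold H2.h2NormSq
  linarith

end Helpers

/-- For `0 < Nσ < 4`: `E_min(m) > -∞` for all `m > 0`; there are `A ∈ ℝ`,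
`B > 0` with `E_min(m) < A·m - B·m^{σ+1}` (so `E_min(m)/m → -∞` as `m → ∞`); and sublevel
sets of the energy at bounded mass are bounded in `H²`. -/
theorem stmt6 (N : ℕ) (σ : ℝ) (hN : 1 ≤ N) (hσ : 0 < σ) (hcrit : (N : ℝ) * σ < 4) :
    (∀ m : ℝ, 0 < m → ⊥ < EminE N σ m) ∧
    (∃ A B : ℝ, 0 < B ∧ ∀ m : ℝ, 0 < m →
      EminE N σ m < ((A * m - B * m ^ (σ + 1) : ℝ) : EReal)) ∧
    Tendsto (fun m : ℝ => (EminE N σ m).toReal / m) atTop atBot ∧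
    (∀ k₁ k₂ : ℝ, 0 < k₁ → 0 < k₂ → ∃ C : ℝ, ∀ U : H2 N,
      rLp 2 U.u ≤ k₁ → U.energy σ ≤ k₂ → U.h2NormSq ≤ C) := by
  exact ⟨EminE_lower N σ hN hσ hcrit, EminE_upper N σ hσ,
    EminE_tendsto N σ hN hσ hcrit,
    fun k₁ k₂ h₁ _ => h2_bound N σ hN hσ hcrit k₁ k₂ h₁⟩

end
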